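/- If a continuous map f : 𝖱^n → 𝖱 is unbounded (i.e., its image is not contained in any [0,z]), then f is N-cofinal, i.e., the restriction of f to the full diagonal Δ_N = {(x,…,x) : x ∈ 𝖱} is unbounded. -/

import Mathlib

noncomputable section
open Set

/-- The first uncountable ordinal `ω₁`. -/
def Omega1 : Ordinal := Ordinal.omega 1

/-- The closed long ray `𝖱`: `ω₁ × [0,1)` with the lexicographic order. -/
def LongRay : Type 1 := {o : Ordinal // o < Omega1} ×ₗ (Set.Ico (0:ℝ) 1)

instance : LinearOrder LongRay :=
  inferInstanceAs (LinearOrder ({o : Ordinal // o < Omega1} ×ₗ (Set.Ico (0:ℝ) 1)))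

/-- `𝖱` carries the order topology. -/
instance : TopologicalSpace LongRay := Preorder.topology LongRay
instance : OrderTopology LongRay := ⟨rfl⟩

lemma omega1_pos : (0 : Ordinal) < Omega1 := Ordinal.omega_pos 1

/-- The point `0 = (0,0)` of the long ray. -/
def rayZero : LongRay := toLex (⟨0, omega1_pos⟩, ⟨0, by simp⟩)

/-- Identification of the countable ordinal `o` with the point `(o,0)` of the long ray
(junk value for `o ≥ ω₁`). -/
def ordR (o : Ordinal) : LongRay :=
  if h : o < Omega1 then toLex (⟨o, h⟩, ⟨0, by simp⟩) else rayZero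

/-- The `I`-diagonal at height `c` (only the values of `c` off `I` are relevant). -/
def Delta (n : ℕ) (I : Finset (Fin n)) (c : Fin n → LongRay) : Set (Fin n → LongRay) :=
  {x | (∀ i ∈ I, ∀ i' ∈ I, x i = x i') ∧ ∀ j ∉ I, x j = c j}

/-- `f` is `I`-cofinal if `f` restricted to `Δ_I = Δ_I(0)` is unbounded. -/
def ICofinal (n : ℕ) (f : (Fin n → LongRay) → LongRay) (I : Finset (Fin n)) : Prop :=
  ¬ BddAbove (f '' Delta n I (fun _ => rayZero))

/-- The cofinality class `𝔠(f) = {I : f is I-cofinal}`. -/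
def cofClass (n : ℕ) (f : (Fin n → LongRay) → LongRay) : Set (Finset (Fin n)) :=
  {I | ICofinal n f I}

/-- `M_I(c) = {x : x_i ≥ c for all i ∈ I}`. -/
def MSet (n : ℕ) (I : Finset (Fin n)) (c : LongRay) : Set (Fin n → LongRay) :=
  {x | ∀ i ∈ I, c ≤ x i}

/-- `E_I(b,d) = {x ∈ M_I(d) : x_j = b_j for all j ∉ I}`. -/
def ESet (n : ℕ) (I : Finset (Fin n)) (b : Fin n → LongRay) (d : LongRay) :
    Set (Fin n → LongRay) :=
  {x | (∀ i ∈ I, d ≤ x i) ∧ ∀ j ∉ I, x j = b j}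

/-!
By an interleaving argument, a closed set with points in every box `{x | b ≤ x}` contains diagonal
points arbitrarily far out, so it suffices to find large values of `f` in every such box. If `f` is
bounded on every slice `x i = c`, then it is bounded on every slab `x i ≤ c`, because initial
segments of `𝖱` are separable; hence its large values lie in the box. Otherwise, by induction on the
dimension, `f` is unbounded on the diagonal of some slice. Since initial segments are connected, the
height of that slice may be increased to that of the box, and the diagonal then runs inside the box.
-/

open Filter Topology TopologicalSpace

lemma continuous_insertNth {X : Type*} [TopologicalSpace X] {n : ℕ} (i : Fin (n + 1)) :
    Continuous fun p : X × (Fin n → X) => (i.insertNth p.1 p.2 : Fin (n + 1) → X) :=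
  Continuous.finInsertNth (A := fun _ => X) i continuous_fst continuous_snd

section CountablyDirected

variable {Y : Type*} [LinearOrder Y] [CountableInterFilter (atTop : Filter Y)]

lemma bddAbove_biUnion_of_countable [Nonempty Y] {κ : Type*} {D : Set κ} (hD : D.Countable)
    {A : κ → Set Y} (hA : ∀ i ∈ D, BddAbove (A i)) : BddAbove (⋃ i ∈ D, A i) := by
  have hev : ∀ᶠ u in atTop, ∀ i ∈ D, u ∈ upperBounds (A i) := by
    refine (eventually_countable_ball hD).2 fun i hi => ?_
    obtain ⟨u, hu⟩ := hA i hi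
    filter_upwards [eventually_ge_atTop u] with v huv using upperBounds_mono_mem huv hu
  obtain ⟨u, hu⟩ := hev.exists
  refine ⟨u, fun y hy => ?_⟩
  obtain ⟨i, hi, hyi⟩ := mem_iUnion₂.1 hy
  exact hu i hi hyi

lemma bddAbove_of_countable [Nonempty Y] {s : Set Y} (hs : s.Countable) : BddAbove s := by
  simpa only [biUnion_of_singleton] using
    bddAbove_biUnion_of_countable hs fun y _ => bddAbove_singleton (a := y)

variable [TopologicalSpace Y]

lemma bddAbove_of_isSeparable [Nonempty Y] [ClosedIicTopology Y] {s : Set Y}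
    (hs : IsSeparable s) : BddAbove s := by
  obtain ⟨D, hD, hsD⟩ := hs
  exact (bddAbove_of_countable hD).closure.mono hsD

lemma bddAbove_biUnion_range_of_isSeparable [Nonempty Y] [ClosedIicTopology Y] {K Z : Type*}
    [TopologicalSpace K] {S : Set K} (hS : IsSeparable S) {g : K → Z → Y}
    (hg : ∀ y, Continuous fun s => g s y) (hb : ∀ s, BddAbove (range (g s))) :
    BddAbove (⋃ s ∈ S, range (g s)) := by
  obtain ⟨D, hD, hSD⟩ := hS
  obtain ⟨u, hu⟩ := bddAbove_biUnion_of_countable hD fun s _ => hb s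
  have hle (y : Z) : closure D ⊆ {s | g s y ≤ u} :=
    closure_minimal (fun s hs => hu (mem_biUnion hs (mem_range_self y)))
      (isClosed_Iic.preimage (hg y))
  refine ⟨u, ?_⟩
  rintro _ hy
  obtain ⟨s, hs, y, rfl⟩ := mem_iUnion₂.1 hy
  exact hle y (hSD hs)

lemma frequently_le_of_not_bddAbove_range [ClosedIicTopology Y] {X : Type*} [LinearOrder X]
    [TopologicalSpace X] (hX : ∀ b : X, IsSeparable (Iic b)) {h : X → Y}
    (hh : Continuous h) (hu : ¬ BddAbove (range h)) (z : Y) : ∃ᶠ t in atTop, z ≤ h t := by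
  have : Nonempty Y := ⟨z⟩
  have : Nonempty X := range_nonempty_iff_nonempty.1 (nonempty_of_not_bddAbove hu)
  refine frequently_atTop.2 fun b => ?_
  by_contra! hlt
  have himage : BddAbove (h '' Iic b) := bddAbove_of_isSeparable ((hX b).image hh)
  refine hu ((himage.union (bddAbove_Iic (a := z))).mono ?_)
  rintro _ ⟨t, rfl⟩
  exact (le_total t b).imp (mem_image_of_mem h) fun hbt => (hlt t hbt).le

lemma frequently_le_of_bddAbove_slices [ClosedIicTopology Y] {X : Type*} [LinearOrder X]
    [TopologicalSpace X] (hX : ∀ b : X, IsSeparable (Iic b)) {n : ℕ}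
    {f : (Fin (n + 1) → X) → Y} (hf : Continuous f) (hu : ¬ BddAbove (range f))
    (hslice : ∀ (i : Fin (n + 1)) (c : X), BddAbove (range fun y => f (i.insertNth c y)))
    (z : Y) : ∃ᶠ x in atTop, z ≤ f x := by
  have : Nonempty Y := ⟨z⟩
  have : Nonempty (Fin (n + 1) → X) :=
    range_nonempty_iff_nonempty.1 (nonempty_of_not_bddAbove hu)
  refine frequently_atTop.2 fun b => ?_
  by_contra! hlt
  have hslab (i : Fin (n + 1)) : BddAbove (f '' {x | x i ≤ b i}) := by
    refine (bddAbove_biUnion_range_of_isSeparable (hX (b i))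
      (fun _ => hf.comp (continuous_insertNth i).curry_left) (hslice i)).mono ?_
    rintro _ ⟨x, hx, rfl⟩
    exact mem_biUnion hx ⟨i.removeNth x, congrArg f (i.insertNth_self_removeNth x)⟩
  have hslabs := bddAbove_biUnion_of_countable countable_univ fun i _ => hslab i
  refine hu ((hslabs.union (bddAbove_Iic (a := z))).mono ?_)
  rintro _ ⟨x, rfl⟩
  by_cases hx : b ≤ x
  · exact Or.inr (hlt x hx).le
  · obtain ⟨i, hi⟩ : ∃ i, x i < b i := by simpa [Pi.le_def] using hx
    exact Or.inl (mem_biUnion (mem_univ i) (mem_image_of_mem f hi.le))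

end CountablyDirected

section Diagonal

variable {X : Type*} [ConditionallyCompleteLinearOrder X] [TopologicalSpace X] [OrderTopology X]
  [CountableInterFilter (atTop : Filter X)]

-- Interleaving: points of `C` chosen in the boxes `[βₖ, βₖ₊₁]^ι`, with `β` monotone, converge to
-- the diagonal point `sup β`.
lemma frequently_const_mem_of_isClosed {ι : Type*} [Countable ι] {C : Set (ι → X)}
    (hC : IsClosed C) (hfreq : ∃ᶠ x in atTop, x ∈ C) : ∃ᶠ t in atTop, (fun _ => t) ∈ C := by
  refine frequently_atTop.2 fun b => ?_
  choose x hx hxC using fun t : X => frequently_atTop.1 hfreq fun _ => t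
  choose next hnext using fun t : X =>
    bddAbove_of_countable ((countable_range (x t)).insert t)
  let β : ℕ → X := fun k => next^[k] b
  have hβ (k : ℕ) : next (β k) = β (k + 1) := (Function.iterate_succ_apply' next k b).symm
  have hmono : Monotone β := monotone_nat_of_le_succ fun k =>
    (hnext (β k) (mem_insert _ _)).trans (hβ k).le
  have hbdd : BddAbove (range β) := bddAbove_of_countable (countable_range β)
  have hlim : Tendsto β atTop (𝓝 (⨆ k, β k)) := tendsto_atTop_ciSup hmono hbdd
  have hxlim : Tendsto (fun k => x (β k)) atTop (𝓝 fun _ => ⨆ k, β k) :=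
    tendsto_pi_nhds.2 fun i => tendsto_of_tendsto_of_tendsto_of_le_of_le hlim
      ((tendsto_add_atTop_iff_nat 1).2 hlim) (fun k => hx (β k) i)
      fun k => (hnext (β k) (mem_insert_of_mem _ (mem_range_self i))).trans (hβ k).le
  exact ⟨⨆ k, β k, le_ciSup hbdd 0, hC.mem_of_tendsto hxlim (.of_forall fun k => hxC (β k))⟩

variable {Y : Type*} [LinearOrder Y] [TopologicalSpace Y] [OrderClosedTopology Y]

lemma frequently_forall_le_of_countable {κ : Type*} [Countable κ] {h : κ → X → Y} {z : Y}
    (hh : ∀ k, Continuous (h k)) (hfreq : ∀ k, ∃ᶠ t in atTop, z ≤ h k t) :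
    ∃ᶠ t in atTop, ∀ k, z ≤ h k t := by
  have hclosed : IsClosed {x : κ → X | ∀ k, z ≤ h k (x k)} := by
    simp only [ofPred_forall]
    exact isClosed_iInter fun k =>
      isClosed_le continuous_const ((hh k).comp (continuous_apply k))
  refine frequently_const_mem_of_isClosed hclosed (frequently_atTop.2 fun b => ?_)
  choose x hbx hzx using fun k => frequently_atTop.1 (hfreq k) (b k)
  exact ⟨x, hbx, hzx⟩

variable [CountableInterFilter (atTop : Filter Y)]

-- At a suitable `t`, the values `g s t` for `s` in a countable dense set are either at most `M`
-- (if `g s` is bounded) or at least `z > M` (if it is not), so that the connected set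
-- `{g s t | s ∈ S}` cannot meet both sides of the gap.
lemma not_bddAbove_range_of_isPreconnected (hX : ∀ b : X, IsSeparable (Iic b)) {K : Type*}
    [TopologicalSpace K] {S : Set K} (hS : IsPreconnected S) (hSsep : IsSeparable S)
    {g : K → X → Y} (hgK : ∀ t, Continuous fun s => g s t) (hgX : ∀ s, Continuous (g s))
    {s₀ s₁ : K} (hs₀ : s₀ ∈ S) (hs₁ : s₁ ∈ S) (hu : ¬ BddAbove (range (g s₀))) :
    ¬ BddAbove (range (g s₁)) := by
  intro hb
  have : Nonempty Y := ⟨g s₀ (sInf univ)⟩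
  obtain ⟨D, hD, hSD⟩ := hSsep
  let U : Set K := {s ∈ insert s₀ D | ¬ BddAbove (range (g s))}
  let B : Set K := {s ∈ insert s₁ D | BddAbove (range (g s))}
  have hU : U.Countable := (hD.insert s₀).mono (sep_subset _ _)
  have hB : B.Countable := (hD.insert s₁).mono (sep_subset _ _)
  obtain ⟨M, hM⟩ := bddAbove_biUnion_of_countable hB fun s hs => hs.2
  have hMB : ∀ s ∈ B, ∀ t, g s t ≤ M := fun s hs t =>
    hM (mem_biUnion hs (mem_range_self t))
  obtain ⟨w, -, hMw⟩ := not_bddAbove_iff.1 hu M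
  obtain ⟨z, -, hwz⟩ := not_bddAbove_iff.1 hu w
  have : Countable U := hU
  obtain ⟨t, ht⟩ := (frequently_forall_le_of_countable (fun s : U => hgX s) fun s =>
    frequently_le_of_not_bddAbove_range hX (hgX s) s.2.2 z).exists
  obtain ⟨s, hs, hst⟩ : w ∈ (fun s => g s t) '' S :=
    hS.intermediate_value hs₁ hs₀ (hgK t).continuousOn
      ⟨(hMB s₁ ⟨mem_insert _ _, hb⟩ t).trans hMw.le, hwz.le.trans (ht ⟨s₀, mem_insert _ _, hu⟩)⟩
  obtain ⟨d, hdgap, hdD⟩ := mem_closure_iff.1 (hSD hs) _ (isOpen_Ioo.preimage (hgK t))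
    ⟨hMw.trans_eq hst.symm, hst.trans_lt hwz⟩
  by_cases hd : BddAbove (range (g d))
  · exact (hMB d ⟨mem_insert_of_mem _ hdD, hd⟩ t).not_gt hdgap.1
  · exact (ht ⟨d, mem_insert_of_mem _ hdD, hd⟩).not_gt hdgap.2

lemma frequently_le_of_not_bddAbove_slice_diag [DenselyOrdered X]
    (hX : ∀ b : X, IsSeparable (Iic b)) {n : ℕ} {f : (Fin (n + 1) → X) → Y} (hf : Continuous f)
    {i : Fin (n + 1)} {c : X} (hu : ¬ BddAbove (range fun t => f (i.insertNth c fun _ => t)))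
    (z : Y) : ∃ᶠ x in atTop, z ≤ f x := by
  refine frequently_atTop.2 fun b => ?_
  have hcont : Continuous fun p : X × X => f (i.insertNth p.1 fun _ => p.2) :=
    hf.comp ((continuous_insertNth i).comp
      (continuous_fst.prodMk (continuous_pi fun _ => continuous_snd)))
  have hub : ¬ BddAbove (range fun t => f (i.insertNth (b i) fun _ => t)) :=
    not_bddAbove_range_of_isPreconnected hX isPreconnected_Iic (hX (max c (b i)))
      (g := fun s t => f (i.insertNth s fun _ => t)) (fun _ => hcont.curry_left)
      (fun _ => hcont.curry_right) (le_max_left _ _) (le_max_right _ _) hu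
  have hlarge : ∃ᶠ t in atTop, z ≤ f (i.insertNth (b i) fun _ => t) :=
    frequently_le_of_not_bddAbove_range hX hcont.curry_right hub z
  obtain ⟨t, hzt, hbt⟩ :=
    (hlarge.and_eventually (eventually_all.2 fun j => eventually_ge_atTop (b j))).exists
  exact ⟨i.insertNth (b i) fun _ => t, Fin.le_insertNth_iff.2 ⟨le_rfl, fun _ => hbt _⟩, hzt⟩

theorem unbounded_implies_N_cofinal_general [DenselyOrdered X]
    (hX : ∀ b : X, IsSeparable (Iic b)) {n : ℕ} {f : (Fin n → X) → Y} (hf : Continuous f)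
    (hu : ¬ BddAbove (range f)) : ¬ BddAbove (range fun t => f fun _ => t) := by
  induction n with
  | zero =>
    have : Nonempty Y := ⟨f fun _ => sInf univ⟩
    exact absurd (finite_range f).bddAbove hu
  | succ n ih =>
    rintro ⟨w, hw⟩
    obtain ⟨z, -, hwz⟩ := not_bddAbove_iff.1 hu w
    suffices hfreq : ∃ᶠ x in atTop, z ≤ f x by
      obtain ⟨t, ht⟩ :=
        (frequently_const_mem_of_isClosed (isClosed_le continuous_const hf) hfreq).exists
      exact (hwz.trans_le ht).not_ge (hw (mem_range_self t))
    by_cases hslice : ∀ (i : Fin (n + 1)) (c : X), BddAbove (range fun y => f (i.insertNth c y))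
    · exact frequently_le_of_bddAbove_slices hX hf hu hslice z
    · push Not at hslice
      obtain ⟨i, c, hc⟩ := hslice
      exact frequently_le_of_not_bddAbove_slice_diag hX hf
        (ih (hf.comp (continuous_insertNth i).curry_right) hc) z

end Diagonal

section LexOrder

lemma exists_isGLB_lex {α β : Type*} [LinearOrder α] [WellFoundedLT α]
    [ConditionallyCompleteLinearOrder β] [OrderBot β] {t : Set (α ×ₗ β)} (ht : t.Nonempty) :
    ∃ u, IsGLB t u := by
  obtain ⟨p, hp, hpmin⟩ := exists_minimalFor_of_wellFoundedLT (· ∈ t) (fun p => (ofLex p).1) ht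
  have hfst (q) (hq : q ∈ t) : (ofLex p).1 ≤ (ofLex q).1 := (le_total _ _).elim id (hpmin hq)
  let R : Set β := {r | toLex ((ofLex p).1, r) ∈ t}
  have hR : R.Nonempty := ⟨(ofLex p).2, hp⟩
  refine ⟨toLex ((ofLex p).1, sInf R), fun q hq => ?_, fun l hl => ?_⟩
  · refine Prod.Lex.le_iff.2 ((hfst q hq).lt_or_eq.imp id fun h => ⟨h, ?_⟩)
    refine csInf_le (OrderBot.bddBelow R) (show toLex ((ofLex p).1, (ofLex q).2) ∈ t from ?_)
    rwa [show (ofLex p).1 = (ofLex q).1 from h]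
  · refine Prod.Lex.le_iff.2 ((Prod.Lex.monotone_fst _ _ (hl hp)).lt_or_eq.imp id fun h => ⟨h, ?_⟩)
    refine le_csInf hR fun r hr => ?_
    simpa [Prod.Lex.le_iff, h] using hl hr

open Classical in
/-- A nonempty linear order in which every nonempty set has an infimum is conditionally complete;
the supremum of a set is the infimum of its upper bounds, and `sInf ∅` is the least element. -/
abbrev conditionallyCompleteLinearOrderOfExistsIsGLB (α : Type*) [LinearOrder α] [Nonempty α]
    (h : ∀ t : Set α, t.Nonempty → ∃ u, IsGLB t u) : ConditionallyCompleteLinearOrder α :=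
  letI : InfSet α :=
    ⟨fun t => if ht : t.Nonempty then (h t ht).choose else (h univ univ_nonempty).choose⟩
  have hsInf (t : Set α) (ht : t.Nonempty) : IsGLB t (sInf t) := by
    rw [show sInf t = (h t ht).choose from dif_pos ht]
    exact (h t ht).choose_spec
  have hempty : sInf (∅ : Set α) = sInf univ := by
    rw [show sInf univ = (h univ univ_nonempty).choose from dif_pos univ_nonempty]
    exact dif_neg Set.not_nonempty_empty
  { ‹LinearOrder α›, conditionallyCompleteLatticeOfLatticeOfsInf α fun t _ ht => hsInf t ht with
    csSup_of_not_bddAbove := fun s hs => by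
      change sInf (upperBounds s) = sInf (upperBounds ∅)
      rw [not_nonempty_iff_eq_empty.1 hs, upperBounds_empty, hempty]
    csInf_of_not_bddBelow := fun s hs =>
      absurd ⟨sInf univ, fun _ _ => (hsInf univ univ_nonempty).1 (mem_univ _)⟩ hs }

lemma countableInterFilter_atTop {α : Type*} [Preorder α] [Nonempty α] [IsDirectedOrder α]
    (h : ∀ s : Set α, s.Countable → BddAbove s) : CountableInterFilter (atTop : Filter α) := by
  refine ⟨fun S hS hmem => ?_⟩
  choose! a ha using fun s hs => mem_atTop_sets.1 (hmem s hs)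
  obtain ⟨u, hu⟩ := h (a '' S) (hS.image a)
  exact mem_of_superset (mem_atTop u) fun v huv s hs =>
    ha s hs v ((hu (mem_image_of_mem a hs)).trans huv)

end LexOrder

instance : NoMaxOrder {o : Ordinal // o < Omega1} :=
  (Cardinal.isSuccLimit_omega 1).isSuccPrelimit.noMaxOrder_Iio

lemma countable_Iic_of_omega1 (o : {o : Ordinal // o < Omega1}) : (Iic o).Countable := by
  have hsucc : Order.succ o.1 < Omega1 := (Cardinal.isSuccLimit_omega 1).succ_lt o.2
  have hcard : Cardinal.mk (Iio (Order.succ o.1)) ≤ Cardinal.aleph0 := by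
    rw [Cardinal.mk_Iio_ordinal, Cardinal.lift_le_aleph0, ← Cardinal.lt_aleph_one_iff]
    exact Cardinal.lt_omega_iff_card_lt.1 hsucc
  exact ((Cardinal.le_aleph0_iff_set_countable.1 hcard).preimage Subtype.val_injective).mono
    fun a ha => Order.lt_succ_of_le (show a.1 ≤ o.1 from ha)

lemma bddAbove_of_countable_of_omega1 {s : Set {o : Ordinal // o < Omega1}} (hs : s.Countable) :
    BddAbove s := by
  have : Countable s := hs
  exact ⟨⟨⨆ o : s, o.1.1, Ordinal.iSup_lt_omega_one fun o => o.1.2⟩, fun o ho =>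
    Ordinal.le_iSup (fun o : s => o.1.1) ⟨o, ho⟩⟩

namespace LongRay

/-- The ordinal coordinate of a point of `𝖱`. -/
def ordPart (x : LongRay) : {o : Ordinal // o < Omega1} :=
  (ofLex (α := {o : Ordinal // o < Omega1} × Ico (0 : ℝ) 1) x).1

lemma monotone_ordPart : Monotone ordPart := Prod.Lex.monotone_fst

/-- The embedding of `[0,1)` into `𝖱` as the fibre of `ordPart` over `o`. -/
def fibre (o : {o : Ordinal // o < Omega1}) (r : Ico (0 : ℝ) 1) : LongRay := toLex (o, r)

lemma strictMono_fibre (o : {o : Ordinal // o < Omega1}) : StrictMono (fibre o) :=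
  fun _ _ h => Prod.Lex.right _ h

lemma range_fibre (o : {o : Ordinal // o < Omega1}) : range (fibre o) = ordPart ⁻¹' {o} := by
  ext x
  exact ⟨by rintro ⟨r, rfl⟩; rfl, by rintro rfl; exact ⟨(ofLex x).2, rfl⟩⟩

lemma continuous_fibre (o : {o : Ordinal // o < Omega1}) : Continuous (fibre o) :=
  ((strictMono_fibre o).isEmbedding_of_ordConnected
    (range_fibre o ▸ ordConnected_singleton.preimage_mono monotone_ordPart)).continuous

lemma isSeparable_Iic (b : LongRay) : IsSeparable (Iic b) := by
  have : Countable (Iic b.ordPart) := countable_Iic_of_omega1 b.ordPart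
  refine (IsSeparable.iUnion fun o : Iic b.ordPart =>
    isSeparable_range (continuous_fibre o)).mono fun x hx => ?_
  simp only [range_fibre]
  exact mem_iUnion.2 ⟨⟨x.ordPart, monotone_ordPart hx⟩, rfl⟩

lemma bddAbove_of_countable {s : Set LongRay} (hs : s.Countable) : BddAbove s := by
  obtain ⟨o, ho⟩ := bddAbove_of_countable_of_omega1 (hs.image ordPart)
  obtain ⟨o', ho'⟩ := exists_gt o
  exact ⟨fibre o' ⟨0, by simp⟩, fun x hx =>
    Prod.Lex.le_iff.2 (Or.inl ((ho (mem_image_of_mem _ hx)).trans_lt ho'))⟩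

instance : Nonempty LongRay := ⟨rayZero⟩
instance : DenselyOrdered LongRay := inferInstanceAs (DenselyOrdered (_ ×ₗ Ico (0 : ℝ) 1))

instance : CountableInterFilter (atTop : Filter LongRay) :=
  countableInterFilter_atTop fun _ => bddAbove_of_countable

/-- The conditionally complete order on `𝖱`. It is not an instance, so that the order on `LongRay`
is found through its `LinearOrder`. -/
abbrev conditionallyCompleteLinearOrder : ConditionallyCompleteLinearOrder LongRay :=
  haveI : Inhabited (Ico (0 : ℝ) 1) := ⟨0, by simp⟩
  conditionallyCompleteLinearOrderOfExistsIsGLB LongRay fun _ ht => exists_isGLB_lex ht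

end LongRay

lemma const_mem_Delta_univ (n : ℕ) (c : Fin n → LongRay) (t : LongRay) :
    (fun _ => t) ∈ Delta n Finset.univ c :=
  ⟨fun _ _ _ _ => rfl, fun j hj => absurd (Finset.mem_univ j) hj⟩

/-- an unbounded continuous map `f : 𝖱ⁿ → 𝖱` is `N`-cofinal. -/
theorem unbounded_implies_N_cofinal (n : ℕ) (f : (Fin n → LongRay) → LongRay)
    (hf : Continuous f) (hunbd : ¬ BddAbove (Set.range f)) :
    ICofinal n f Finset.univ := by
  let := LongRay.conditionallyCompleteLinearOrder
  have hdiag : ¬ BddAbove (range fun t => f fun _ => t) :=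
    unbounded_implies_N_cofinal_general LongRay.isSeparable_Iic hf hunbd
  exact fun hb => hdiag (hb.mono (range_subset_iff.2 fun t =>
    mem_image_of_mem f (const_mem_Delta_univ n _ t)))
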